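/- arXiv:math/0702700 — 5 statements merged into one kernel-verified Lean document; each statement's English description precedes it below -/
import Mathlib

section
/- Let H be a complex Hilbert space, d ≥ 1 an integer, V a linear subspace of B(H), and φ : V → M_d(V) a linear map that is bounded with norm ‖φ‖ when M_d(V) carries the block-operator norm. Then for every m ≥ 1 and every a ∈ V, the m-th step of the quantum random walk satisfies ‖φ^{(m)}(a)‖ ≤ d^{m−1} · ‖φ‖^m · ‖a‖, where φ^{(m)}(a) ∈ M_{d^m}(V) is identified with a block operator on the ℓ²-direct sum of copies of H indexed by m-tuples in {0,…,d−1}. -/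
noncomputable section

/-- The quantum random walk generated by `φ : V → M_d(V)`: `φ^(0) = id` and
`φ^(m+1)(a)_{(𝐢,i),(𝐣,j)} = φ(φ^(m)(a)_{𝐢,𝐣})_{i,j}`, with rows and columns indexed by
`m`-tuples in `{0,…,d−1}`. -/
def qrw {V : Type*} {d : ℕ} (φ : V → Matrix (Fin d) (Fin d) V) :
    (m : ℕ) → V → Matrix (Fin m → Fin d) (Fin m → Fin d) V
  | 0 => fun a _ _ => a
  | (m + 1) => fun a I J =>
      φ (qrw φ m a (fun r => I r.castSucc) (fun r => J r.castSucc))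
        (I (Fin.last m)) (J (Fin.last m))

/-- The block operator on the `ℓ²`-direct sum induced by a matrix of bounded operators,
acting by `(T x) i = ∑ j, M i j (x j)`. -/
def blockOp {H₁ H₂ : Type*} [NormedAddCommGroup H₁] [InnerProductSpace ℂ H₁]
    [NormedAddCommGroup H₂] [InnerProductSpace ℂ H₂]
    {S : Type*} [Fintype S] [DecidableEq S]
    (M : Matrix S S (H₁ →L[ℂ] H₂)) :
    PiLp 2 (fun _ : S => H₁) →L[ℂ] PiLp 2 (fun _ : S => H₂) :=
  ∑ i : S, ∑ j : S,
    (((PiLp.continuousLinearEquiv 2 ℂ (fun _ : S => H₂)).symm :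
          (∀ _ : S, H₂) →L[ℂ] PiLp 2 (fun _ : S => H₂)).comp
      ((ContinuousLinearMap.pi
          (fun k : S => if k = i then ContinuousLinearMap.id ℂ H₂ else 0)).comp
        ((M i j).comp
          ((ContinuousLinearMap.proj j :
              (∀ _ : S, H₁) →L[ℂ] H₁).comp
            ((PiLp.continuousLinearEquiv 2 ℂ (fun _ : S => H₁)) :
              PiLp 2 (fun _ : S => H₁) →L[ℂ] (∀ _ : S, H₁))))))

theorem blockOp_apply_aux {H : Type*} [NormedAddCommGroup H] [InnerProductSpace ℂ H]
    {S : Type*} [Fintype S] [DecidableEq S]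
    (M : Matrix S S (H →L[ℂ] H)) (x : PiLp 2 (fun _ : S => H)) (k : S) :
    blockOp M x k = ∑ j, M k j (x j) := by
  simp only [blockOp, _root_.sum_apply, WithLp.ofLp_sum, Finset.sum_apply]
  rw [Finset.sum_eq_single k]
  · simp
  · intro b _ hb
    simp [hb.symm]
  · simp

theorem norm_entry_le_aux {H : Type*} [NormedAddCommGroup H] [InnerProductSpace ℂ H]
    {S : Type*} [Fintype S] [DecidableEq S]
    (M : Matrix S S (H →L[ℂ] H)) (i j : S) : ‖M i j‖ ≤ ‖blockOp M‖ := by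
  refine ContinuousLinearMap.opNorm_le_bound _ (ContinuousLinearMap.opNorm_nonneg _) fun v => ?_
  have h1 : blockOp M (PiLp.single 2 j v) i = M i j v := by
    rw [blockOp_apply_aux, Finset.sum_eq_single j]
    · simp
    · intro b _ hb
      simp [hb]
    · simp
  rw [← h1]
  refine (PiLp.norm_apply_le _ i).trans ?_
  refine ((blockOp M).le_opNorm _).trans ?_
  simp

theorem qrw_shift_aux {V : Type*} {d : ℕ} (φ : V → Matrix (Fin d) (Fin d) V) (m : ℕ) (a : V)
    (I J : Fin (m + 1) → Fin d) :
    qrw φ (m + 1) a I J = qrw φ m (φ a (I 0) (J 0)) (fun r => I r.succ) (fun r => J r.succ) := by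
  induction m with
  | zero => rfl
  | succ m ih =>
    exact congrArg (fun v => φ v (I (Fin.last (m + 1))) (J (Fin.last (m + 1))))
      (ih (fun r => I r.castSucc) (fun r => J r.castSucc))

theorem normSq_aux {H : Type*} [NormedAddCommGroup H] [InnerProductSpace ℂ H]
    {S : Type*} [Fintype S] (x : PiLp 2 (fun _ : S => H)) : ‖x‖ ^ 2 = ∑ i, ‖x i‖ ^ 2 :=
  PiLp.norm_sq_eq_of_L2 _ x

theorem sum_cons_aux {E : Type*} [AddCommMonoid E] {d m : ℕ} (f : (Fin (m + 1) → Fin d) → E) :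
    ∑ I, f I = ∑ i : Fin d, ∑ I : Fin m → Fin d, f (Fin.cons i I) := by
  rw [← Fintype.sum_prod_type', ← Equiv.sum_comp (Fin.consEquiv (fun _ => Fin d))]
  rfl

theorem base_aux {H : Type*} [NormedAddCommGroup H] [InnerProductSpace ℂ H] {d : ℕ}
    (M : Matrix (Fin d) (Fin d) (H →L[ℂ] H)) :
    ‖blockOp (fun I J : Fin 1 → Fin d => M (I 0) (J 0))‖ ≤ ‖blockOp M‖ := by
  refine ContinuousLinearMap.opNorm_le_bound _ (ContinuousLinearMap.opNorm_nonneg _) fun x => ?_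
  let y : PiLp 2 (fun _ : Fin d => H) := WithLp.toLp 2 (fun j => x (fun _ => j))
  have e : ∀ (f : (Fin 1 → Fin d) → H),
      ∑ I, f I = ∑ i : Fin d, f (fun _ => i) := fun f =>
    (Equiv.sum_comp (Equiv.funUnique (Fin 1) (Fin d)).symm f).symm
  have e' : ∀ (f : (Fin 1 → Fin d) → ℝ),
      ∑ I, f I = ∑ i : Fin d, f (fun _ => i) := fun f =>
    (Equiv.sum_comp (Equiv.funUnique (Fin 1) (Fin d)).symm f).symm
  have hy : ‖x‖ = ‖y‖ := by
    rw [← sq_eq_sq₀ (norm_nonneg _) (norm_nonneg _), normSq_aux, normSq_aux, e']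
  have hz : ‖blockOp (fun I J : Fin 1 → Fin d => M (I 0) (J 0)) x‖ = ‖blockOp M y‖ := by
    rw [← sq_eq_sq₀ (norm_nonneg _) (norm_nonneg _), normSq_aux, normSq_aux, e']
    refine Finset.sum_congr rfl fun i _ => ?_
    have hA := blockOp_apply_aux (fun I J : Fin 1 → Fin d => M (I 0) (J 0)) x (fun _ => i)
    refine (congrArg (fun v => ‖v‖ ^ 2) hA).trans ?_
    rw [e, blockOp_apply_aux]
  rw [hy, hz]
  exact (blockOp M).le_opNorm y

theorem step_aux {H : Type*} [NormedAddCommGroup H] [InnerProductSpace ℂ H] {d m : ℕ}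
    (T : Fin d → Fin d → Matrix (Fin m → Fin d) (Fin m → Fin d) (H →L[ℂ] H))
    (K : ℝ) (hK : 0 ≤ K) (hT : ∀ i j, ‖blockOp (T i j)‖ ≤ K) :
    ‖blockOp (fun I J : Fin (m + 1) → Fin d =>
      T (I 0) (J 0) (fun r => I r.succ) (fun r => J r.succ))‖ ≤ d * K := by
  refine ContinuousLinearMap.opNorm_le_bound _ (by positivity) fun x => ?_
  let y : Fin d → PiLp 2 (fun _ : Fin m → Fin d => H) :=
    fun j => WithLp.toLp 2 (fun J => x (Fin.cons j J))
  have hx : ‖x‖ ^ 2 = ∑ j, ‖y j‖ ^ 2 := by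
    simp only [normSq_aux, y]
    rw [sum_cons_aux]
  have hz : ‖blockOp (fun I J : Fin (m + 1) → Fin d =>
      T (I 0) (J 0) (fun r => I r.succ) (fun r => J r.succ)) x‖ ^ 2
      = ∑ i, ‖∑ j, blockOp (T i j) (y j)‖ ^ 2 := by
    rw [normSq_aux, sum_cons_aux]
    refine Finset.sum_congr rfl fun i _ => ?_
    rw [normSq_aux]
    refine Finset.sum_congr rfl fun I _ => ?_
    have hA := blockOp_apply_aux (fun I J : Fin (m + 1) → Fin d =>
      T (I 0) (J 0) (fun r => I r.succ) (fun r => J r.succ)) x (Fin.cons i I)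
    refine (congrArg (fun v => ‖v‖ ^ 2) hA).trans ?_
    rw [sum_cons_aux]
    simp only [WithLp.ofLp_sum, Finset.sum_apply, blockOp_apply_aux, Fin.cons_zero,
      Fin.cons_succ, y]
  rw [← sq_le_sq₀ (norm_nonneg _) (by positivity), hz]
  have hb : ∀ i, ‖∑ j, blockOp (T i j) (y j)‖ ^ 2 ≤ K ^ 2 * (d * ‖x‖ ^ 2) := by
    intro i
    have h1 : ‖∑ j, blockOp (T i j) (y j)‖ ≤ K * ∑ j, ‖y j‖ := by
      rw [Finset.mul_sum]
      exact norm_sum_le_of_le _ fun j _ => (blockOp (T i j)).le_of_opNorm_le (hT i j) _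
    have h2 : (∑ j, ‖y j‖) ^ 2 ≤ d * ‖x‖ ^ 2 := by
      rw [hx]
      simpa using sq_sum_le_card_mul_sum_sq (s := Finset.univ) (f := fun j => ‖y j‖)
    calc _ ≤ (K * ∑ j, ‖y j‖) ^ 2 := by gcongr
      _ = K ^ 2 * (∑ j, ‖y j‖) ^ 2 := by ring
      _ ≤ _ := by gcongr
  calc _ ≤ ∑ _i : Fin d, K ^ 2 * (d * ‖x‖ ^ 2) := Finset.sum_le_sum fun i _ => hb i
    _ = (d * K * ‖x‖) ^ 2 := by simp; ring

/-- If `V ⊆ B(H)` is a subspace and `φ : V → M_d(V)` is a linear map which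
is bounded, with `‖φ(a)‖ ≤ C⬝‖a‖` for the block-operator norm, then the `m`-th step of the
quantum random walk satisfies `‖φ^(m)(a)‖ ≤ d^(m−1)⬝C^m⬝‖a‖` for every `m ≥ 1`. -/
theorem norm_qrw_le
    {H : Type*} [NormedAddCommGroup H] [InnerProductSpace ℂ H] [CompleteSpace H]
    {d : ℕ} (hd : 1 ≤ d)
    (V : Submodule ℂ (H →L[ℂ] H))
    (φ : V →ₗ[ℂ] Matrix (Fin d) (Fin d) V)
    (C : ℝ) (hC : 0 ≤ C)
    (hφ : ∀ a : V, ‖blockOp (fun i j => (φ a i j : H →L[ℂ] H))‖ ≤ C * ‖a‖)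
    (m : ℕ) (hm : 1 ≤ m) (a : V) :
    ‖blockOp (fun I J => (qrw (fun v => φ v) m a I J : H →L[ℂ] H))‖ ≤
      (d : ℝ) ^ (m - 1) * C ^ m * ‖a‖ := by
  obtain ⟨m, rfl⟩ : ∃ n, m = n + 1 := ⟨m - 1, by omega⟩
  clear hm
  rw [Nat.add_sub_cancel]
  induction m generalizing a with
  | zero =>
    have h := (base_aux (fun i j => (φ a i j : H →L[ℂ] H))).trans (hφ a)
    rw [pow_zero, one_mul, zero_add, pow_one]
    exact h
  | succ m ih =>
    have hent : ∀ i j, ‖φ a i j‖ ≤ C * ‖a‖ := fun i j =>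
      (norm_entry_le_aux (fun i j => (φ a i j : H →L[ℂ] H)) i j).trans (hφ a)
    have h := step_aux (fun i j I J => (qrw (fun v => φ v) (m + 1) (φ a i j) I J : H →L[ℂ] H))
      ((d : ℝ) ^ m * C ^ (m + 1) * (C * ‖a‖)) (by positivity) (fun i j =>
        (ih (φ a i j)).trans (by gcongr; exact hent i j))
    simp only [qrw_shift_aux (fun v => φ v) (m + 1) a]
    refine h.trans (le_of_eq ?_)
    ring

end
end

section
/- Let V be a complex vector space, d ≥ 1 an integer, and φ : V → M_d(V) a linear map. Define φ̃ : V → M_d(V) by φ̃(a)_{i,j} := φ(a)_{i,j} − [i = 0][j = 0]·a (subtracting a in the (0,0) entry). For 0 ≤ m ≤ n and a strictly increasing tuple p = (p₁ < p₂ < ⋯ < p_m) of elements of {0,…,n−1}, define the linear map v_p^n : M_{d^m}(V) → M_{d^n}(V) (matrices indexed by m-tuples, respectively n-tuples, in {0,…,d−1}) by (v_p^n(X))_{𝐢,𝐣} := X_{(i_{p₁},…,i_{p_m}),(j_{p₁},…,j_{p_m})} if i_q = 0 and j_q = 0 for every q ∈ {0,…,n−1} \ {p₁,…,p_m}, and (v_p^n(X))_{𝐢,𝐣}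 := 0 otherwise. Then for every n ≥ 0 and every a ∈ V, φ^{(n)}(a) = Σ_{m=0}^{n} Σ_{p} v_p^n(φ̃^{(m)}(a)), where the inner sum runs over all strictly increasing m-tuples p in {0,…,n−1} (for m = 0 the unique empty tuple, with v_∅^n(a) the matrix equal to a at the all-zero index pair and 0 elsewhere). -/
noncomputable section

instance {m n : ℕ} : DecidablePred (fun p : Fin m → Fin n => StrictMono p) := fun p =>
  decidable_of_iff (∀ a b : Fin m, a < b → p a < p b) Iff.rfl

/-- The embedding `v_p^n` of matrices indexed by `m`-tuples into matrices indexed by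
`n`-tuples determined by a strictly increasing tuple `p : Fin m → Fin n`: the entry of
`v_p^n X` at `(𝐢,𝐣)` is `X_{(i_{p₁},…,i_{p_m}),(j_{p₁},…,j_{p_m})}` if `i_q = 0 = j_q`
for all `q` outside the range of `p`, and `0` otherwise. -/
def vEmb {V : Type*} [AddCommGroup V] {d m n : ℕ} [NeZero d] (p : Fin m → Fin n)
    (X : Matrix (Fin m → Fin d) (Fin m → Fin d) V) :
    Matrix (Fin n → Fin d) (Fin n → Fin d) V :=
  fun I J =>
    if (∀ q : Fin n, (∀ r : Fin m, p r ≠ q) → (I q = 0 ∧ J q = 0))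
      then X (fun r => I (p r)) (fun r => J (p r)) else 0

theorem strictMono_castSucc_comp {m n : ℕ} {p : Fin m → Fin n} (hp : StrictMono p) :
    StrictMono (fun r => (p r).castSucc) := fun _ _ h => Fin.castSucc_lt_castSucc_iff.2 (hp h)

theorem strictMono_snoc_last {m n : ℕ} {p : Fin m → Fin n} (hp : StrictMono p) :
    StrictMono (Fin.snoc (α := fun _ => Fin (n + 1)) (fun r => (p r).castSucc) (Fin.last n)) := by
  intro x y h
  induction y using Fin.lastCases with
  | last =>
    induction x using Fin.lastCases with
    | last => exact absurd h (lt_irrefl _)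
    | cast x => simpa using Fin.castSucc_lt_last (p x)
  | cast y =>
    induction x using Fin.lastCases with
    | last => exact absurd h (not_lt.2 (Fin.le_last _))
    | cast x =>
      simp only [Fin.snoc_castSucc]
      exact Fin.castSucc_lt_castSucc_iff.2 (hp (Fin.castSucc_lt_castSucc_iff.1 h))

/-- Splitting of increasing tuples according to whether the top value is attained. -/
def splitFun (m n : ℕ) :
    {p : Fin (m + 1) → Fin n // StrictMono p} ⊕ {p : Fin m → Fin n // StrictMono p} →
      {p : Fin (m + 1) → Fin (n + 1) // StrictMono p} :=
  Sum.elim (fun p => ⟨_, strictMono_castSucc_comp p.2⟩) (fun p => ⟨_, strictMono_snoc_last p.2⟩)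

theorem splitFun_bijective (m n : ℕ) : Function.Bijective (splitFun m n) := by
  constructor
  · rintro (p | p) (q | q) h
    · congr 1
      apply Subtype.ext
      funext r
      have := congrFun (congrArg Subtype.val h) r
      simpa [splitFun] using this
    · have := congrFun (congrArg Subtype.val h) (Fin.last m)
      simp [splitFun] at this
    · have := congrFun (congrArg Subtype.val h) (Fin.last m)
      simp [splitFun] at this
      exact absurd this.symm (Fin.castSucc_lt_last _).ne
    · congr 1
      apply Subtype.ext
      funext r
      have := congrFun (congrArg Subtype.val h) r.castSucc
      simpa [splitFun] using this
  · rintro ⟨p, hp⟩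
    by_cases hl : p (Fin.last m) = Fin.last n
    · have hne : ∀ r : Fin m, p r.castSucc ≠ Fin.last n := fun r =>
        (lt_of_lt_of_le (hp (Fin.castSucc_lt_last r)) (Fin.le_last _)).ne
      refine ⟨Sum.inr ⟨fun r => (p r.castSucc).castPred (hne r), ?_⟩, ?_⟩
      · intro x y h
        exact Fin.castPred_lt_castPred_iff.2 (hp (Fin.castSucc_lt_castSucc_iff.2 h))
      · apply Subtype.ext
        funext r
        induction r using Fin.lastCases with
        | last => simp [splitFun, hl]
        | cast r => simp [splitFun]
    · have hne : ∀ r, p r ≠ Fin.last n := fun r =>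
        (lt_of_le_of_lt (hp.monotone (Fin.le_last r)) (Fin.lt_last_iff_ne_last.2 hl)).ne
      refine ⟨Sum.inl ⟨fun r => (p r).castPred (hne r), ?_⟩, ?_⟩
      · intro x y h
        exact Fin.castPred_lt_castPred_iff.2 (hp h)
      · apply Subtype.ext
        funext r
        simp [splitFun]

section
variable {V : Type*} [AddCommGroup V] {d : ℕ} [NeZero d]

theorem vEmb_castSucc {m n : ℕ} (p : Fin m → Fin n)
    (X : Matrix (Fin m → Fin d) (Fin m → Fin d) V) (I J : Fin (n + 1) → Fin d) :
    vEmb (fun r => (p r).castSucc) X I J =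
      if I (Fin.last n) = 0 ∧ J (Fin.last n) = 0 then
        vEmb p X (fun r => I r.castSucc) (fun r => J r.castSucc) else 0 := by
  unfold vEmb
  rw [← ite_and]
  congr 1
  simp only [Fin.forall_fin_succ', Fin.castSucc_inj, eq_iff_iff]
  have : ∀ r, (p r).castSucc ≠ Fin.last n := fun r => (Fin.castSucc_lt_last _).ne
  simp only [ne_eq, Fin.castSucc_inj]
  constructor
  · rintro ⟨h1, h2⟩
    exact ⟨h2 this, h1⟩
  · rintro ⟨h1, h2⟩
    exact ⟨h2, fun _ => h1⟩

theorem vEmb_snoc {m n : ℕ} (p : Fin m → Fin n) (φ : V → Matrix (Fin d) (Fin d) V)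
    (h0 : ∀ i j, φ 0 i j = 0) (a : V) (I J : Fin (n + 1) → Fin d) :
    vEmb (Fin.snoc (α := fun _ => Fin (n + 1)) (fun r => (p r).castSucc) (Fin.last n))
        (qrw φ (m + 1) a) I J =
      φ (vEmb p (qrw φ m a) (fun r => I r.castSucc) (fun r => J r.castSucc))
        (I (Fin.last n)) (J (Fin.last n)) := by
  have key : (∀ q : Fin (n + 1), (∀ r : Fin (m + 1),
      (Fin.snoc (α := fun _ => Fin (n + 1)) (fun r => (p r).castSucc) (Fin.last n)) r ≠ q) →
        (I q = 0 ∧ J q = 0)) ↔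
      (∀ q : Fin n, (∀ r : Fin m, p r ≠ q) → (I q.castSucc = 0 ∧ J q.castSucc = 0)) := by
    constructor
    · intro h q hq
      apply h
      intro r
      induction r using Fin.lastCases with
      | last => simpa using (Fin.castSucc_lt_last q).ne'
      | cast r => simpa using hq r
    · intro h q hq
      induction q using Fin.lastCases with
      | last => exact absurd (by simp) (hq (Fin.last m))
      | cast q =>
        apply h
        intro r hr
        exact hq r.castSucc (by simp [hr])
  unfold vEmb
  by_cases h : (∀ q : Fin n, (∀ r : Fin m, p r ≠ q) → (I q.castSucc = 0 ∧ J q.castSucc = 0))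
  · rw [if_pos (key.2 h), if_pos h]
    simp [qrw]
  · rw [if_neg (fun h' => h (key.1 h')), if_neg h, h0]

end

theorem wiener_entry
    {V : Type*} [AddCommGroup V] [Module ℂ V] {d : ℕ} [NeZero d]
    (φ : V →ₗ[ℂ] Matrix (Fin d) (Fin d) V) (ψ : V → Matrix (Fin d) (Fin d) V)
    (hψ : ∀ v i j, ψ v i j = φ v i j - if i = 0 ∧ j = 0 then v else 0) (a : V) (n : ℕ) :
    ∀ I J, qrw (fun v => φ v) n a I J =
      ∑ m ∈ Finset.range (n + 1),
        ∑ p : {p : Fin m → Fin n // StrictMono p}, vEmb p.1 (qrw ψ m a) I J := by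
  have h0 : ∀ i j, ψ 0 i j = 0 := by intro i j; simp [hψ]
  have hadd : ∀ v w i j, ψ (v + w) i j = ψ v i j + ψ w i j := by
    intro v w i j
    simp only [hψ, map_add, Matrix.add_apply]
    split_ifs <;> abel
  have hsum : ∀ {ι : Type} (s : Finset ι) (f : ι → V) i j,
      ψ (∑ x ∈ s, f x) i j = ∑ x ∈ s, ψ (f x) i j := by
    intro ι s f i j
    classical
    induction s using Finset.induction_on with
    | empty => simp [h0]
    | insert x s hx ih => rw [Finset.sum_insert hx, Finset.sum_insert hx, hadd, ih]
  induction n with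
  | zero =>
    intro I J
    have : Unique {p : Fin 0 → Fin 0 // StrictMono p} :=
      ⟨⟨⟨Fin.elim0, fun x => x.elim0⟩⟩, fun p => Subtype.ext (Subsingleton.elim _ _)⟩
    simp only [zero_add, Finset.sum_range_one]
    rw [Fintype.sum_unique]
    simp [qrw, vEmb]
  | succ n ih =>
    intro I J
    have hstep : ∀ m, ∑ p : {p : Fin (m + 1) → Fin (n + 1) // StrictMono p},
          vEmb p.1 (qrw ψ (m + 1) a) I J =
        (if I (Fin.last n) = 0 ∧ J (Fin.last n) = 0 then
          ∑ p : {p : Fin (m + 1) → Fin n // StrictMono p},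
            vEmb p.1 (qrw ψ (m + 1) a) (fun r => I r.castSucc) (fun r => J r.castSucc) else 0) +
        ψ (∑ p : {p : Fin m → Fin n // StrictMono p},
            vEmb p.1 (qrw ψ m a) (fun r => I r.castSucc) (fun r => J r.castSucc))
          (I (Fin.last n)) (J (Fin.last n)) := by
      intro m
      rw [← (splitFun_bijective m n).sum_comp, Fintype.sum_sum_type, hsum]
      congr 1
      · simp only [splitFun, Sum.elim_inl, vEmb_castSucc]
        split_ifs <;> simp
      · simp only [splitFun, Sum.elim_inr, vEmb_snoc _ ψ h0]
    have hzero : ∑ p : {p : Fin 0 → Fin (n + 1) // StrictMono p}, vEmb p.1 (qrw ψ 0 a) I J =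
        (if I (Fin.last n) = 0 ∧ J (Fin.last n) = 0 then
          ∑ p : {p : Fin 0 → Fin n // StrictMono p},
            vEmb p.1 (qrw ψ 0 a) (fun r => I r.castSucc) (fun r => J r.castSucc) else 0) := by
      have hu : ∀ k, ∀ f : {p : Fin 0 → Fin k // StrictMono p} → V,
          ∑ p, f p = f ⟨Fin.elim0, fun x => x.elim0⟩ := by
        intro k f
        apply Fintype.sum_eq_single
        intro p hp
        exact absurd (Subtype.ext (Subsingleton.elim _ _)) hp
      rw [hu, hu, ← vEmb_castSucc]
      congr 1
      exact Subsingleton.elim _ _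
    have htop : ∑ p : {p : Fin (n + 1) → Fin n // StrictMono p},
        vEmb p.1 (qrw ψ (n + 1) a) (fun r => I r.castSucc) (fun r => J r.castSucc) = 0 := by
      have : IsEmpty {p : Fin (n + 1) → Fin n // StrictMono p} := by
        refine ⟨fun p => ?_⟩
        have := Fintype.card_le_of_injective p.1 p.2.injective
        simp at this
      exact Fintype.sum_empty _
    rw [Finset.sum_range_succ', hzero]
    simp only [hstep]
    rw [Finset.sum_add_distrib, ← hsum, ← ih]
    have hs := ih (fun r => I r.castSucc) (fun r => J r.castSucc)
    rw [← add_zero (Finset.sum _ _), ← htop, ← Finset.sum_range_succ,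
      Finset.sum_range_succ'] at hs
    change φ (qrw (fun v => φ v) n a (fun r => I r.castSucc) (fun r => J r.castSucc))
      (I (Fin.last n)) (J (Fin.last n)) = _
    rw [hψ]
    split_ifs with h
    · generalize φ (qrw (fun v => φ v) n a (fun r => I r.castSucc) (fun r => J r.castSucc))
        (I (Fin.last n)) (J (Fin.last n)) = Y
      rw [hs]
      abel
    · simp

/-- For a linear `φ : V → M_d(V)` let `φ̃` be `φ` with `a` subtracted from
the `(0,0)` entry.  Then `φ^(n)(a) = Σ_{m=0}^n Σ_{p} v_p^n(φ̃^(m)(a))`, the inner sum running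
over all strictly increasing `m`-tuples `p` in `{0,…,n−1}`. -/
theorem qrw_wiener_ito
    {V : Type*} [AddCommGroup V] [Module ℂ V] {d : ℕ} [NeZero d]
    (φ : V →ₗ[ℂ] Matrix (Fin d) (Fin d) V) (n : ℕ) (a : V) :
    qrw (fun v => φ v) n a =
      ∑ m ∈ Finset.range (n + 1),
        ∑ p : {p : Fin m → Fin n // StrictMono p},
          vEmb p.1
            (qrw
              (fun v i j => φ v i j - if i = 0 ∧ j = 0 then v else 0)
              m a) := by
  funext I J
  rw [wiener_entry φ _ (fun _ _ _ => rfl) a n I J]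
  simp only [Matrix.sum_apply]

end
end

section
/- Let c ∈ ℝ, h > 0, set d := √(c² + 4h) and let M be the real 2×2 matrix with rows (1, √h) and (√h, 1+c). Then for every m ∈ ℕ, the (0,0) entry of M^m equals (1 − 2h/(c+d))^m · (c+d)/(2d) + (1 − 2h/(c−d))^m · (d−c)/(2d). (Since h > 0, one has d > |c|, so c + d > 0 and c − d < 0, and the expression is well defined.) -/
/-- For `c ∈ ℝ`, `h > 0` and `d := √(c² + 4h)`, the `(0,0)` entry of the
`m`-th power of the matrix `[[1, √h], [√h, 1+c]]` equals
`(1 − 2h/(c+d))^m (c+d)/(2d) + (1 − 2h/(c−d))^m (d−c)/(2d)`. -/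
theorem matrix_pow_entry_formula (c h : ℝ) (hh : 0 < h) (m : ℕ) :
    (!![1, Real.sqrt h; Real.sqrt h, 1 + c] ^ m) 0 0 =
      (1 - 2 * h / (c + Real.sqrt (c ^ 2 + 4 * h))) ^ m *
          ((c + Real.sqrt (c ^ 2 + 4 * h)) / (2 * Real.sqrt (c ^ 2 + 4 * h))) +
        (1 - 2 * h / (c - Real.sqrt (c ^ 2 + 4 * h))) ^ m *
          ((Real.sqrt (c ^ 2 + 4 * h) - c) / (2 * Real.sqrt (c ^ 2 + 4 * h))) := by
  have hd : 0 < Real.sqrt (c ^ 2 + 4 * h) := Real.sqrt_pos.mpr (by positivity)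
  have hd2 : Real.sqrt (c ^ 2 + 4 * h) ^ 2 = c ^ 2 + 4 * h := Real.sq_sqrt (by positivity)
  have hs2 : Real.sqrt h ^ 2 = h := Real.sq_sqrt hh.le
  generalize Real.sqrt (c ^ 2 + 4 * h) = d at *
  generalize Real.sqrt h = s at *
  have hp : c + d ≠ 0 := by
    intro h0
    have : d = -c := by linarith
    subst this
    nlinarith
  have hm : c - d ≠ 0 := by
    intro h0
    have : d = c := by linarith
    subst this
    nlinarith
  have ha : 1 - 2 * h / (c + d) = 1 + (c - d) / 2 := by
    field_simp
    linear_combination hd2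
  have hb : 1 - 2 * h / (c - d) = 1 + (c + d) / 2 := by
    field_simp
    linear_combination hd2
  rw [ha, hb]
  have key : ∀ n : ℕ, (!![1, s; s, 1 + c] ^ n) 0 0 =
        (1 + (c - d) / 2) ^ n * ((c + d) / (2 * d)) +
          (1 + (c + d) / 2) ^ n * ((d - c) / (2 * d)) ∧
      (!![1, s; s, 1 + c] ^ n) 0 1 =
        s / d * ((1 + (c + d) / 2) ^ n - (1 + (c - d) / 2) ^ n) := by
    intro n
    induction n with
    | zero =>
      constructor
      · simp
        field_simp
        ring
      · simp
    | succ k ih =>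
      obtain ⟨h1, h2⟩ := ih
      rw [pow_succ, Matrix.mul_apply, Matrix.mul_apply, Fin.sum_univ_two, Fin.sum_univ_two,
        h1, h2]
      simp only [Matrix.of_apply, Matrix.cons_val_zero, Matrix.cons_val_one, Matrix.cons_val',
        Matrix.cons_val_fin_one]
      rw [pow_succ, pow_succ]
      generalize (1 + (c - d) / 2) ^ k = A
      generalize (1 + (c + d) / 2) ^ k = B
      constructor
      · field_simp
        linear_combination (4 * (B - A)) * hs2 + (A - B) * hd2
      · field_simp
        ring
  exact (key m).1
end

section
/- Fix c ∈ ℝ with c ≠ 0, an integer m ≥ 0 and t ≥ 0. For h > 0, let M_h be the real 2×2 matrix with rows (1, √h) and (√h, 1+c), and let a(h) denote the (0,0) entry of (M_h)^m. Then lim_{h→0⁺} a(h)^{⌊t/h⌋} = exp(c^{−2}((1+c)^m − 1 − m·c) · t). -/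
open Filter

lemma entry_aux (c : ℝ) (hc : c ≠ 0) (m : ℕ) : ∃ a b : ℝ → ℝ,
    (∀ h : ℝ, 0 < h → ((!![1, Real.sqrt h; Real.sqrt h, 1 + c] ^ m) 0 0) = a h ∧
      ((!![1, Real.sqrt h; Real.sqrt h, 1 + c] ^ m) 0 1) = Real.sqrt h * b h) ∧
    a 0 = 1 ∧ HasDerivAt a (((1 + c) ^ m - 1 - m * c) / c ^ 2) 0 ∧
    b 0 = ((1 + c) ^ m - 1) / c ∧ Differentiable ℝ a ∧ Differentiable ℝ b := by
  induction m with
  | zero =>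
    refine ⟨fun _ => 1, fun _ => 0, ?_, rfl, ?_, by simp, by fun_prop, by fun_prop⟩
    · intro h _; simp
    · simpa using hasDerivAt_const (0 : ℝ) (1 : ℝ)
  | succ n ih =>
    obtain ⟨a, b, hM, ha0, ha, hb0, hda, hdb⟩ := ih
    refine ⟨fun h => a h + h * b h, fun h => a h + (1 + c) * b h, ?_, by simp [ha0], ?_, ?_,
      by fun_prop, by fun_prop⟩
    · intro h hh
      obtain ⟨h1, h2⟩ := hM h hh
      have hs := Real.mul_self_sqrt hh.le
      rw [pow_succ]
      simp only [Matrix.mul_apply, Fin.sum_univ_two, h1, h2]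
      simp
      constructor
      · linear_combination b h * hs
      · ring
    · have := ha.add ((hasDerivAt_id (0 : ℝ)).mul (hdb 0).hasDerivAt)
      refine HasDerivAt.congr_deriv (f := fun h => a h + h * b h) this ?_
      simp only [id, hb0]
      push_cast
      field_simp
      ring
    · simp only [ha0, hb0]
      field_simp
      ring

/-- For `c ≠ 0`, `m ∈ ℕ` and `t ≥ 0`, with `a(h)` the `(0,0)` entry of the
`m`-th power of `[[1, √h], [√h, 1+c]]`, one has
`lim_{h→0⁺} a(h)^⌊t/h⌋ = exp(c⁻²((1+c)^m − 1 − mc) t)`. -/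
theorem matrix_pow_entry_tendsto_poisson_moment (c : ℝ) (hc : c ≠ 0) (m : ℕ) (t : ℝ)
    (ht : 0 ≤ t) :
    Tendsto (fun h : ℝ =>
        ((!![1, Real.sqrt h; Real.sqrt h, 1 + c] ^ m) 0 0) ^ ⌊t / h⌋₊)
      (nhdsWithin 0 (Set.Ioi 0))
      (nhds (Real.exp (((1 + c) ^ m - 1 - m * c) / c ^ 2 * t))) := by
  obtain ⟨a, b, hM, ha0, ha, -, hda, -⟩ := entry_aux c hc m
  have hlog : HasDerivAt (fun h => Real.log (a h)) (((1 + c) ^ m - 1 - m * c) / c ^ 2) 0 := by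
    have := ha.log (by rw [ha0]; exact one_ne_zero)
    simpa [ha0] using this
  have h1 := hlog.tendsto_slope_zero_right
  have h2 := (tendsto_nat_floor_mul_div_atTop (R := ℝ) ht).comp
    (tendsto_inv_nhdsGT_zero (𝕜 := ℝ))
  have h3 := (Real.continuous_exp.tendsto _).comp (h1.mul h2)
  refine h3.congr' ?_
  have hpos : ∀ᶠ h in nhdsWithin (0 : ℝ) (Set.Ioi 0), 0 < a h :=
    nhdsWithin_le_nhds (hda.continuous.continuousAt.eventually_const_lt (by rw [ha0]; norm_num))
  filter_upwards [hpos, self_mem_nhdsWithin] with h hp hh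
  have hh' : (0 : ℝ) < h := hh
  rw [(hM h hh').1]
  simp only [Function.comp, zero_add, ha0, Real.log_one, sub_zero, smul_eq_mul, ← div_eq_mul_inv]
  rw [← Real.exp_log (pow_pos hp _), Real.log_pow]
  congr 1
  field_simp
end

section
/- Fix an integer m ≥ 0 and t ≥ 0. For h > 0, let M_h be the real 2×2 matrix with rows (1, √h) and (√h, 1), and let a(h) denote the (0,0) entry of (M_h)^m. Then lim_{h→0⁺} a(h)^{⌊t/h⌋} = exp(m(m−1)t/2). -/
open Filter

lemma aux_entries (m : ℕ) : ∃ p q : ℝ → ℝ, ∃ q' : ℝ,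
    (∀ h : ℝ, 0 ≤ h → (!![1, Real.sqrt h; Real.sqrt h, 1] ^ m : Matrix (Fin 2) (Fin 2) ℝ)
      = !![p h, Real.sqrt h * q h; Real.sqrt h * q h, p h]) ∧
    p 0 = 1 ∧ q 0 = m ∧ HasDerivAt p ((m : ℝ) * ((m : ℝ) - 1) / 2) 0 ∧ HasDerivAt q q' 0 := by
  induction m with
  | zero =>
    refine ⟨fun _ => 1, fun _ => 0, 0, ?_, rfl, by simp, ?_, hasDerivAt_const _ _⟩
    · intro h _
      simp [Matrix.one_fin_two]
    · simpa using hasDerivAt_const (0 : ℝ) (1 : ℝ)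
  | succ m ih =>
    obtain ⟨p, q, q', hM, hp, hq, hp', hq'⟩ := ih
    refine ⟨fun h => p h + h * q h, fun h => p h + q h, _, ?_, by simp [hp], ?_, ?_, hp'.add hq'⟩
    · intro h hh
      have hs := Real.mul_self_sqrt hh
      rw [pow_succ, hM h hh, Matrix.mul_fin_two]
      congr 1
      ext i j
      fin_cases i <;> fin_cases j <;> simp <;>
        first | ring1 | linear_combination (q h) * hs
    · simp [hp, hq]; ring
    · have := hp'.add ((hasDerivAt_id (0 : ℝ)).mul hq')
      refine HasDerivAt.congr_deriv (f := fun h => p h + h * q h) this ?_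
      simp only [hq, id]
      push_cast
      ring

/-- For `m ∈ ℕ` and `t ≥ 0`, with `a(h)` the `(0,0)` entry of the `m`-th
power of `[[1, √h], [√h, 1]]`, one has `lim_{h→0⁺} a(h)^⌊t/h⌋ = exp(m(m−1)t/2)`. -/
theorem matrix_pow_entry_tendsto_brownian_moment (m : ℕ) (t : ℝ) (ht : 0 ≤ t) :
    Tendsto (fun h : ℝ =>
        ((!![1, Real.sqrt h; Real.sqrt h, 1] ^ m) 0 0) ^ ⌊t / h⌋₊)
      (nhdsWithin 0 (Set.Ioi 0))
      (nhds (Real.exp ((m : ℝ) * ((m : ℝ) - 1) * t / 2))) := by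
  obtain ⟨p, q, q', hM, hp, hq, hp', hq'⟩ := aux_entries m
  have hlog : HasDerivAt (fun h => Real.log (p h)) ((m : ℝ) * ((m : ℝ) - 1) / 2) 0 := by
    have := hp'.log (by rw [hp]; exact one_ne_zero)
    simpa [hp] using this
  have hle : nhdsWithin (0 : ℝ) (Set.Ioi 0) ≤ nhdsWithin 0 {0}ᶜ :=
    nhdsWithin_mono _ (fun x hx => ne_of_gt hx)
  have h1 := hlog.tendsto_slope_zero.mono_left hle
  have h2 : Tendsto (fun h : ℝ => (⌊t / h⌋₊ : ℝ) * h) (nhdsWithin 0 (Set.Ioi 0)) (nhds t) := by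
    have := (tendsto_nat_floor_mul_div_atTop ht).comp (tendsto_inv_nhdsGT_zero (𝕜 := ℝ))
    refine this.congr (fun h => ?_)
    simp [div_eq_mul_inv]
  have h3 := (Real.continuous_exp.tendsto _).comp (h2.mul h1)
  have hpos : ∀ᶠ h in nhdsWithin (0 : ℝ) (Set.Ioi 0), 0 < p h :=
    (hp'.continuousAt.eventually (lt_mem_nhds (by rw [hp]; exact one_pos))).filter_mono
      nhdsWithin_le_nhds
  have e : (m : ℝ) * ((m : ℝ) - 1) * t / 2 = t * ((m : ℝ) * ((m : ℝ) - 1) / 2) := by ring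
  rw [e]
  refine h3.congr' ?_
  filter_upwards [hpos, self_mem_nhdsWithin] with h hph hh
  have hh' : (0 : ℝ) < h := hh
  rw [hM h hh'.le]
  simp only [Function.comp, zero_add, hp, Real.log_one, sub_zero, smul_eq_mul]
  rw [mul_assoc, mul_inv_cancel_left₀ hh'.ne', Real.exp_nat_mul, Real.exp_log hph]
  simp
end
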